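/- For every complex number q with |q| < 1, the sum over all nonnegative integers j of q^(j^2) / ((q;q)_j) equals the product over all positive integers j with j not congruent to 0, 2, or -2 modulo 5 of 1/(1 - q^j). Here (a;q)_j denotes the finite q-Pochhammer symbol ∏_{h=0}^{j-1} (1 - a q^h), with (a;q)_0 = 1. -/

import Mathlib

/-- The finite q-Pochhammer symbol `(a; q)_n = ∏_{h=0}^{n-1} (1 - a q^h)`. -/
noncomputable def qPoch (a q : ℂ) (n : ℕ) : ℂ := ∏ h ∈ Finset.range n, (1 - a * q ^ h)

namespace RR

lemma hasSum_of {f g : ℤ → ℂ} {x y : ℂ} (h : HasSum g y) (hf : ∀ r, f r = g r) (hx : x = y) :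
    HasSum f x := by
  rw [funext hf, hx]
  exact h

/-- Reciprocal of `(q;q)_k`, extended by zero to negative `k`. -/
noncomputable def u (q : ℂ) (k : ℤ) : ℂ := if 0 ≤ k then (qPoch q q k.toNat)⁻¹ else 0

lemma u_neg (q : ℂ) {k : ℤ} (hk : k < 0) : u q k = 0 := by
  simp [u, not_le.mpr hk]

lemma u_zero (q : ℂ) : u q 0 = 1 := by simp [u, qPoch]

lemma u_nat (q : ℂ) (n : ℕ) : u q n = (qPoch q q n)⁻¹ := by simp [u]

lemma one_sub_pow_ne (q : ℂ) (hq : ‖q‖ < 1) (n : ℕ) : 1 - q ^ (n + 1) ≠ 0 := by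
  intro h
  have h1 : q ^ (n + 1) = 1 := (sub_eq_zero.mp h).symm
  have h2 : ‖q‖ ^ (n + 1) = 1 := by rw [← norm_pow, h1, norm_one]
  have h3 := pow_lt_one₀ (norm_nonneg q) hq (Nat.succ_ne_zero n)
  exact absurd h2 h3.ne

lemma u_rec (q : ℂ) (hq : ‖q‖ < 1) (k : ℤ) : (1 - q ^ k) * u q k = u q (k - 1) := by
  rcases lt_trichotomy k 0 with h | h | h
  · rw [u_neg q h, u_neg q (by omega), mul_zero]
  · subst h
    rw [u_neg q (by omega : (0 : ℤ) - 1 < 0)]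
    simp
  · obtain ⟨n, rfl⟩ : ∃ n : ℕ, k = ((n + 1 : ℕ) : ℤ) := ⟨(k - 1).toNat, by omega⟩
    have : (((n + 1 : ℕ) : ℤ) - 1) = (n : ℤ) := by push_cast; ring
    rw [this, u_nat, u_nat, zpow_natCast]
    have h1 := one_sub_pow_ne q hq n
    have h2 : qPoch q q (n + 1) = qPoch q q n * (1 - q ^ (n + 1)) := by
      simp only [qPoch, Finset.prod_range_succ]
      ring
    rw [h2, mul_inv, mul_comm, mul_assoc, inv_mul_cancel₀ h1, mul_one]

lemma one_sub_zpow_ne (q : ℂ) (hq : ‖q‖ < 1) {k : ℤ} (hk : 0 < k) : 1 - q ^ k ≠ 0 := by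
  obtain ⟨n, rfl⟩ : ∃ n : ℕ, k = ((n + 1 : ℕ) : ℤ) := ⟨(k - 1).toNat, by omega⟩
  rw [zpow_natCast]
  exact one_sub_pow_ne q hq n

/-- q-Vandermonde. -/
lemma vander (q : ℂ) (hq : ‖q‖ < 1) (h0 : q ≠ 0) (N : ℕ) : ∀ n a b : ℤ, n - a = N →
    HasSum (fun j : ℤ => q ^ ((j - a) * (j - b)) * u q (n - j) * u q (j - a) * u q (j - b))
      (u q (n - a) * u q (n - b)) := by
  induction N with
  | zero =>
    intro n a b h
    obtain rfl : n = a := by simpa [sub_eq_zero] using h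
    have key := hasSum_single (f := fun j : ℤ =>
      q ^ ((j - n) * (j - b)) * u q (n - j) * u q (j - n) * u q (j - b)) n (by
        intro j hj
        rcases lt_or_gt_of_ne hj with h | h
        · simp [u_neg q (by omega : j - n < 0)]
        · simp [u_neg q (by omega : n - j < 0)])
    simpa [u_zero] using key
  | succ N ih =>
    intro n a b h
    have h1 := ih (n - 1) a b (by push_cast at h; omega)
    have h2 := (ih n (a + 1) b (by push_cast at h; omega)).mul_left (q ^ (n - b))
    have h3 := h1.add h2
    have hne := one_sub_zpow_ne q hq (by omega : 0 < n - a)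
    have h4 := h3.mul_left ((1 - q ^ (n - a))⁻¹)
    refine hasSum_of h4 ?_ ?_
    · intro j
      rw [eq_inv_mul_iff_mul_eq₀ hne]
      have e1 := u_rec q hq (n - j)
      have e2 := u_rec q hq (j - a)
      have e3 : q ^ (n - a) = q ^ (n - j) * q ^ (j - a) := by
        rw [← zpow_add₀ h0]; congr 1; ring
      have e4 : q ^ (n - b) * q ^ ((j - (a + 1)) * (j - b))
          = q ^ ((j - a) * (j - b)) * q ^ (n - j) := by
        rw [← zpow_add₀ h0, ← zpow_add₀ h0]; congr 1; ring
      rw [show n - 1 - j = n - j - 1 by ring, show j - (a + 1) = j - a - 1 by ring] at *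
      rw [← e1, ← e2, e3]
      linear_combination (-(1 - q ^ (j - a)) * u q (n - j) * u q (j - a) * u q (j - b)) * e4
    · rw [eq_inv_mul_iff_mul_eq₀ hne]
      have e1 := u_rec q hq (n - a)
      have e2 := u_rec q hq (n - b)
      rw [show n - 1 - a = n - a - 1 by ring, show n - 1 - b = n - b - 1 by ring,
        show n - (a + 1) = n - a - 1 by ring, ← e1, ← e2]
      ring

lemma vander' (q : ℂ) (hq : ‖q‖ < 1) (h0 : q ≠ 0) (n a b : ℤ) :
    HasSum (fun j : ℤ => q ^ ((j - a) * (j - b)) * u q (n - j) * u q (j - a) * u q (j - b))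
      (u q (n - a) * u q (n - b)) := by
  by_cases h : 0 ≤ n - a
  · exact vander q hq h0 (n - a).toNat n a b (by omega)
  · rw [u_neg q (by omega : n - a < 0), zero_mul]
    convert (hasSum_zero : HasSum (fun _ : ℤ => (0 : ℂ)) 0) using 2 with j
    by_cases h' : j < a
    · simp [u_neg q (by omega : j - a < 0)]
    · simp [u_neg q (by omega : n - j < 0)]

/-- Triangular numbers. -/
def t (r : ℤ) : ℤ := r * (r - 1) / 2

lemma two_t (r : ℤ) : 2 * t r = r * (r - 1) := by
  unfold t
  have : (2 : ℤ) ∣ r * (r - 1) := (Int.even_mul_pred_self r).two_dvd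
  omega

lemma t_succ (r : ℤ) : t (r + 1) = t r + r := by
  have h1 := two_t r
  have h2 := two_t (r + 1)
  nlinarith

/-- Summand of the finite Jacobi triple product. -/
noncomputable def T (q z : ℂ) (a b r : ℤ) : ℂ :=
  (-1) ^ r * z ^ r * q ^ t r * u q (a - r) * u q (b + r)

lemma T_a (q z : ℂ) (hq : ‖q‖ < 1) (h0 : q ≠ 0) (hz : z ≠ 0) (a b r : ℤ) :
    (1 - q ^ (a + 1 + b)) * T q z (a + 1) b r
      = T q z a b r + (- z * q ^ a) * T q z a b (r - 1) := by
  obtain ⟨s, rfl⟩ : ∃ s, r = s + 1 := ⟨r - 1, by ring⟩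
  have e1 := u_rec q hq (a - s)
  have e2 := u_rec q hq (b + (s + 1))
  have e3 : q ^ (a + 1 + b) = q ^ (a - s) * q ^ (b + (s + 1)) := by
    rw [← zpow_add₀ h0]; congr 1; ring
  have e4 : q ^ t (s + 1) * q ^ (a - s) = q ^ a * q ^ t s := by
    rw [← zpow_add₀ h0, ← zpow_add₀ h0, t_succ]; congr 1; ring
  have hm : (-1 : ℂ) ^ (s + 1) = - (-1) ^ s := by
    rw [zpow_add₀ (by norm_num)]; simp
  have hz1 : z ^ (s + 1) = z ^ s * z := zpow_add_one₀ hz s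
  unfold T
  rw [show a + 1 - (s + 1) = a - s by ring, show a - (s + 1) = a - s - 1 by ring,
    show s + 1 - 1 = s by ring, show b + s = b + (s + 1) - 1 by ring, ← e1, ← e2, e3, hm, hz1]
  linear_combination (-(-1) ^ s * z ^ s * z * u q (a - s) * u q (b + (s + 1)) *
    (1 - q ^ (b + (s + 1)))) * e4

lemma T_b (q z : ℂ) (hq : ‖q‖ < 1) (h0 : q ≠ 0) (hz : z ≠ 0) (a b r : ℤ) :
    (1 - q ^ (a + (b + 1))) * T q z a (b + 1) r
      = T q z a b r + (- z⁻¹ * q ^ (b + 1)) * T q z a b (r + 1) := by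
  have e1 := u_rec q hq (a - r)
  have e2 := u_rec q hq (b + 1 + r)
  have e3 : q ^ (a + (b + 1)) = q ^ (a - r) * q ^ (b + 1 + r) := by
    rw [← zpow_add₀ h0]; congr 1; ring
  have e4 : q ^ (b + 1) * q ^ t (r + 1) = q ^ t r * q ^ (b + 1 + r) := by
    rw [← zpow_add₀ h0, ← zpow_add₀ h0, t_succ]; congr 1; ring
  have hm : (-1 : ℂ) ^ (r + 1) = - (-1) ^ r := by
    rw [zpow_add₀ (by norm_num)]; simp
  have hz1 : z ^ (r + 1) = z ^ r * z := zpow_add_one₀ hz r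
  have hz2 : z⁻¹ * z = 1 := inv_mul_cancel₀ hz
  unfold T
  rw [show b + (r + 1) = b + 1 + r by ring, show a - (r + 1) = a - r - 1 by ring,
    show b + r = b + 1 + r - 1 by ring, ← e1, ← e2, e3, hm, hz1]
  linear_combination (-(-1) ^ r * z ^ r * u q (a - r) * u q (b + 1 + r) *
    (1 - q ^ (a - r))) * e4 - ((-1) ^ r * z ^ r * u q (a - r) * u q (b + 1 + r) *
    (1 - q ^ (a - r))) * q ^ (b + 1) * q ^ t (r + 1) * hz2

/-- Finite Jacobi triple product. -/
lemma jtp (q z : ℂ) (hq : ‖q‖ < 1) (h0 : q ≠ 0) (hz : z ≠ 0) (a b : ℕ) :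
    HasSum (T q z a b) (qPoch z q a * qPoch (q / z) q b * u q (a + b)) := by
  induction a with
  | zero =>
    induction b with
    | zero =>
      have key := hasSum_single (f := T q z 0 0) 0 (by
        intro j hj
        unfold T
        rcases lt_or_gt_of_ne hj with h | h
        · simp [u_neg q (by omega : j < 0)]
        · simp [u_neg q (by omega : -j < 0)])
      simpa [u_zero, T, t, qPoch] using key
    | succ b ih =>
      have h2 := ((Equiv.addRight (1 : ℤ)).hasSum_iff.mpr ih).mul_left (- z⁻¹ * q ^ ((b : ℤ) + 1))
      have h3 := ih.add h2
      have hne := one_sub_zpow_ne q hq (by positivity : 0 < (((0 : ℕ) : ℤ) + ((b : ℤ) + 1)))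
      have h4 := h3.mul_left ((1 - q ^ (((0 : ℕ) : ℤ) + ((b : ℤ) + 1)))⁻¹)
      refine hasSum_of h4 ?_ ?_
      · intro r
        rw [eq_inv_mul_iff_mul_eq₀ hne]
        push_cast
        have := T_b q z hq h0 hz 0 b r
        simpa using this
      · rw [eq_inv_mul_iff_mul_eq₀ hne]
        have e := u_rec q hq (((0 : ℕ) : ℤ) + ((b : ℤ) + 1))
        rw [show (((0 : ℕ) : ℤ) + ((b : ℤ) + 1)) - 1 = ((0 : ℕ) : ℤ) + b by ring] at e
        push_cast at *
        rw [← e]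
        have h5 : qPoch (q / z) q (b + 1) = qPoch (q / z) q b * (1 - z⁻¹ * q ^ (b + 1)) := by
          simp only [qPoch, Finset.prod_range_succ]
          ring
        have h6 : q ^ ((b : ℤ) + 1) = q ^ (b + 1) := by exact_mod_cast zpow_natCast q (b + 1)
        rw [h5, h6]
        ring
  | succ a ih =>
    have h2 := ((Equiv.subRight (1 : ℤ)).hasSum_iff.mpr ih).mul_left (- z * q ^ (a : ℤ))
    have h3 := ih.add h2
    have hne := one_sub_zpow_ne q hq (by positivity : 0 < (a : ℤ) + 1 + b)
    have h4 := h3.mul_left ((1 - q ^ ((a : ℤ) + 1 + b))⁻¹)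
    refine hasSum_of h4 ?_ ?_
    · intro r
      rw [eq_inv_mul_iff_mul_eq₀ hne]
      push_cast
      exact T_a q z hq h0 hz a b r
    · rw [eq_inv_mul_iff_mul_eq₀ hne]
      have e := u_rec q hq ((a : ℤ) + 1 + b)
      rw [show ((a : ℤ) + 1 + b) - 1 = a + b by ring] at e
      push_cast at *
      rw [← e]
      have h5 : qPoch z q (a + 1) = qPoch z q a * (1 - z * q ^ a) := by
        simp only [qPoch, Finset.prod_range_succ]
      rw [h5, zpow_natCast]
      ring

/-- Bailey's lemma with `a = 1`. -/
lemma bailey (q : ℂ) (hq : ‖q‖ < 1) (h0 : q ≠ 0) (α : ℤ → ℂ) (n : ℤ) :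
    ∑' j : ℤ, q ^ (j ^ 2) * u q (n - j) * ∑' r : ℤ, α r * u q (j - r) * u q (j + r)
      = ∑' r : ℤ, (α r * q ^ (r ^ 2)) * u q (n - r) * u q (n + r) := by
  have hs : Summable (Function.uncurry fun j r : ℤ =>
      q ^ (j ^ 2) * u q (n - j) * (α r * u q (j - r) * u q (j + r))) := by
    apply summable_of_hasFiniteSupport
    apply ((Finset.Icc 0 n) ×ˢ (Finset.Icc (-n) n)).finite_toSet.subset
    rintro ⟨j, r⟩ h
    simp only [Function.mem_support, Function.uncurry] at h
    have h1 : 0 ≤ n - j := by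
      by_contra hh; exact h (by simp [u_neg q (not_le.mp hh)])
    have h2 : 0 ≤ j - r := by
      by_contra hh; exact h (by simp [u_neg q (not_le.mp hh)])
    have h3 : 0 ≤ j + r := by
      by_contra hh; exact h (by simp [u_neg q (not_le.mp hh)])
    simp only [Finset.coe_product, Finset.coe_Icc, Set.mem_prod, Set.mem_Icc]
    omega
  simp_rw [← tsum_mul_left]
  rw [← hs.tsum_comm]
  refine tsum_congr fun r => ?_
  have h := (vander' q hq h0 n r (-r)).mul_left (α r * q ^ (r ^ 2))
  rw [sub_neg_eq_add, ← mul_assoc] at h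
  rw [← h.tsum_eq]
  refine tsum_congr fun j => ?_
  have : q ^ (j ^ 2) = q ^ (r ^ 2) * q ^ ((j - r) * (j - -r)) := by
    rw [← zpow_add₀ h0]; congr 1; ring
  rw [this, sub_neg_eq_add]
  ring

lemma unit_pair (q : ℂ) (hq : ‖q‖ < 1) (h0 : q ≠ 0) (j : ℤ) :
    ∑' r : ℤ, ((-1) ^ r * q ^ t r) * u q (j - r) * u q (j + r) = if j = 0 then 1 else 0 := by
  rcases lt_or_ge j 0 with h | h
  · rw [if_neg h.ne]
    convert tsum_zero with r
    rcases le_total r 0 with h' | h'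
    · simp [u_neg q (by omega : j + r < 0)]
    · simp [u_neg q (by omega : j - r < 0)]
  · obtain ⟨n, rfl⟩ := Int.eq_ofNat_of_zero_le h
    have := (jtp q 1 hq h0 one_ne_zero n n).tsum_eq
    simp only [T, one_zpow, mul_one] at this
    rw [this]
    rcases n with _ | n
    · simp [qPoch, u_zero]
    · rw [if_neg (by push_cast; omega)]
      have : qPoch 1 q (n + 1) = 0 := by
        unfold qPoch
        rw [Finset.prod_eq_zero (Finset.mem_range.mpr (Nat.succ_pos n))]
        simp
      rw [this]; simp

lemma finite_rr (q : ℂ) (hq : ‖q‖ < 1) (h0 : q ≠ 0) (n : ℤ) :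
    ∑' j : ℤ, q ^ (j ^ 2) * u q (n - j) * u q j
      = ∑' r : ℤ, ((-1) ^ r * q ^ (2 * r + 5 * t r)) * u q (n - r) * u q (n + r) := by
  have b1 : ∀ n : ℤ, u q n = ∑' r : ℤ, ((-1) ^ r * q ^ t r * q ^ (r ^ 2)) *
      u q (n - r) * u q (n + r) := by
    intro n
    have h := bailey q hq h0 (fun r => (-1) ^ r * q ^ t r) n
    rw [← h]
    simp_rw [unit_pair q hq h0]
    rw [tsum_eq_single 0 (by intro j hj; simp [hj])]
    simp
  have h := bailey q hq h0 (fun r => (-1) ^ r * q ^ t r * q ^ (r ^ 2)) n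
  simp_rw [← b1] at h
  rw [h]
  refine tsum_congr fun r => ?_
  have : q ^ (2 * r + 5 * t r) = q ^ t r * q ^ (r ^ 2) * q ^ (r ^ 2) := by
    rw [← zpow_add₀ h0, ← zpow_add₀ h0]; congr 1
    have := two_t r
    nlinarith
  rw [this]; ring

open Filter Topology

lemma summable_pow_mul (q a : ℂ) (hq : ‖q‖ < 1) : Summable fun n : ℕ => ‖a * q ^ n‖ := by
  simp_rw [norm_mul, norm_pow]
  exact (summable_geometric_of_lt_one (norm_nonneg _) hq).mul_left _

lemma tendsto_qPoch (a q : ℂ) (hq : ‖q‖ < 1) : ∃ L, Tendsto (qPoch a q) atTop (𝓝 L) := by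
  have h : Multipliable fun n : ℕ => 1 + -(a * q ^ n) :=
    multipliable_one_add_of_summable (by simpa using summable_pow_mul q a hq)
  refine ⟨_, h.hasProd.tendsto_prod_nat.congr fun n => ?_⟩
  simp [qPoch, sub_eq_add_neg]

/-- Weight used in the product side. -/
lemma multipliable_ind (q : ℂ) (hq : ‖q‖ < 1) (S : Set ℕ) :
    Multipliable (S.mulIndicator fun n : ℕ => (1 - q ^ (n + 1))⁻¹) := by
  have key : ∀ n : ℕ, ‖(1 - q ^ (n + 1))⁻¹ - 1‖ ≤ (1 - ‖q‖)⁻¹ * ‖q‖ ^ n := by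
    intro n
    have hne := one_sub_pow_ne q hq n
    have e : (1 - q ^ (n + 1))⁻¹ - 1 = (1 - q ^ (n + 1))⁻¹ * q ^ (n + 1) := by
      field_simp; ring
    have hp : 0 < 1 - ‖q‖ := by linarith
    have hle : ‖q‖ ^ (n + 1) ≤ ‖q‖ := pow_le_of_le_one (norm_nonneg _) hq.le (Nat.succ_ne_zero n)
    have h1 : 1 - ‖q‖ ≤ ‖1 - q ^ (n + 1)‖ := by
      have := norm_sub_norm_le (1 : ℂ) (q ^ (n + 1))
      rw [norm_one, norm_pow] at this
      linarith
    rw [e, norm_mul, norm_inv, norm_pow]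
    have h2 := pow_le_pow_of_le_one (norm_nonneg q) hq.le (Nat.le_succ n)
    have h3 : ‖1 - q ^ (n + 1)‖⁻¹ ≤ (1 - ‖q‖)⁻¹ := inv_anti₀ hp h1
    exact mul_le_mul h3 h2 (by positivity) (by positivity)
  have hs : Summable fun n : ℕ => ‖S.indicator (fun n : ℕ => (1 - q ^ (n + 1))⁻¹ - 1) n‖ := by
    refine Summable.of_nonneg_of_le (fun _ => norm_nonneg _) (fun n => ?_)
      ((summable_geometric_of_lt_one (norm_nonneg _) hq).mul_left (1 - ‖q‖)⁻¹)
    exact (norm_indicator_le_norm_self _ _).trans (key n)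
  convert multipliable_one_add_of_summable hs using 2 with n
  by_cases h : n ∈ S <;> simp [h]

lemma tendsto_u (q : ℂ) (hq : ‖q‖ < 1) :
    ∃ P, P ≠ 0 ∧ Tendsto (fun n : ℕ => u q n) atTop (𝓝 P) := by
  obtain ⟨L, hL⟩ := tendsto_qPoch q q hq
  have h := (multipliable_ind q hq Set.univ).hasProd.tendsto_prod_nat
  have h' : Tendsto (fun n : ℕ => u q n) atTop
      (𝓝 (∏' n, (Set.univ : Set ℕ).mulIndicator (fun n : ℕ => (1 - q ^ (n + 1))⁻¹) n)) := by
    refine h.congr fun n => ?_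
    simp [u_nat, qPoch, pow_succ']
  refine ⟨_, ?_, h'⟩
  intro h0
  rw [h0] at h'
  have h1 := h'.mul hL
  have h2 : (fun n : ℕ => u q n * qPoch q q n) = fun _ => 1 := by
    funext n
    rw [u_nat]
    apply inv_mul_cancel₀
    unfold qPoch
    rw [Finset.prod_ne_zero_iff]
    intro i _
    have := one_sub_pow_ne q hq i
    rwa [pow_succ'] at this
  rw [h2, zero_mul] at h1
  exact one_ne_zero (tendsto_nhds_unique tendsto_const_nhds h1)

lemma bdd_u (q : ℂ) (hq : ‖q‖ < 1) : ∃ C, 0 ≤ C ∧ ∀ k : ℤ, ‖u q k‖ ≤ C := by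
  obtain ⟨P, -, hP⟩ := tendsto_u q hq
  obtain ⟨C, hC⟩ := hP.norm.bddAbove_range
  have hC' : ∀ n : ℕ, ‖u q n‖ ≤ C := fun n => hC ⟨n, rfl⟩
  have h0 : 0 ≤ C := (norm_nonneg _).trans (hC' 0)
  refine ⟨C, h0, fun k => ?_⟩
  rcases lt_or_ge k 0 with h | h
  · rw [u_neg q h, norm_zero]; exact h0
  · obtain ⟨n, rfl⟩ := Int.eq_ofNat_of_zero_le h
    exact hC' n

lemma tendsto_u_shift (q : ℂ) {P : ℂ} (hP : Tendsto (fun n : ℕ => u q n) atTop (𝓝 P)) (r : ℤ) :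
    Tendsto (fun n : ℕ => u q (n + r)) atTop (𝓝 P) := by
  have h1 : Tendsto (fun n : ℕ => ((n : ℤ) + r).toNat) atTop atTop := by
    rw [tendsto_atTop]
    intro b
    filter_upwards [eventually_ge_atTop (b + r.natAbs)] with n hn
    omega
  refine (hP.comp h1).congr' ?_
  filter_upwards [eventually_ge_atTop r.natAbs] with n hn
  simp only [Function.comp]
  congr 1
  omega

lemma summable_zpow (q : ℂ) (hq : ‖q‖ < 1) (h0 : q ≠ 0) (e : ℤ → ℤ) (he : ∀ r, |r| ≤ e r) :
    Summable fun r : ℤ => ‖q ^ e r‖ := by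
  have h : Summable fun r : ℤ => ‖q‖ ^ (r.natAbs) := by
    have hg := summable_geometric_of_lt_one (norm_nonneg q) hq
    apply Summable.of_nat_of_neg <;> simpa using hg
  refine Summable.of_nonneg_of_le (fun _ => norm_nonneg _) (fun r => ?_) h
  rw [norm_zpow, ← zpow_natCast]
  apply zpow_le_zpow_right_of_le_one₀ (norm_pos_iff.mpr h0) hq.le
  simpa using he r

lemma limit_two (q : ℂ) (hq : ‖q‖ < 1) {P : ℂ}
    (hP : Tendsto (fun n : ℕ => u q n) atTop (𝓝 P)) (f : ℤ → ℂ) (hf : Summable fun r => ‖f r‖) :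
    Tendsto (fun n : ℕ => ∑' r : ℤ, f r * u q (n - r) * u q (n + r)) atTop
      (𝓝 (∑' r : ℤ, f r * P * P)) := by
  obtain ⟨C, hC0, hC⟩ := bdd_u q hq
  refine tendsto_tsum_of_dominated_convergence (bound := fun r => ‖f r‖ * C * C)
    ((hf.mul_right C).mul_right C) (fun r => ?_) (Eventually.of_forall fun n r => ?_)
  · have h1 := tendsto_u_shift q hP r
    have h2 := tendsto_u_shift q hP (-r)
    exact (h2.const_mul (f r)).mul h1
  · rw [norm_mul, norm_mul]
    gcongr <;> exact hC _

lemma limit_one (q : ℂ) (hq : ‖q‖ < 1) {P : ℂ}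
    (hP : Tendsto (fun n : ℕ => u q n) atTop (𝓝 P)) (f : ℤ → ℂ) (hf : Summable fun r => ‖f r‖) :
    Tendsto (fun n : ℕ => ∑' r : ℤ, f r * u q (n - r) * u q r) atTop
      (𝓝 (∑' r : ℤ, f r * P * u q r)) := by
  obtain ⟨C, hC0, hC⟩ := bdd_u q hq
  refine tendsto_tsum_of_dominated_convergence (bound := fun r => ‖f r‖ * C * C)
    ((hf.mul_right C).mul_right C) (fun r => ?_) (Eventually.of_forall fun n r => ?_)
  · have h2 := tendsto_u_shift q hP (-r)
    exact (h2.const_mul (f r)).mul_const _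
  · rw [norm_mul, norm_mul]
    gcongr <;> exact hC _

lemma expo_bound (r : ℤ) : |r| ≤ 2 * r + 5 * t r := by
  have := two_t r
  rcases lt_trichotomy r 0 with h | h | h
  · rw [abs_of_neg h]; nlinarith
  · subst h; simp [t]
  · rw [abs_of_pos h]; nlinarith

lemma sq_bound (r : ℤ) : |r| ≤ r ^ 2 := by
  rcases lt_trichotomy r 0 with h | h | h
  · rw [abs_of_neg h]; nlinarith
  · subst h; simp
  · rw [abs_of_pos h]; nlinarith

/-- The index set of the product, shifted by one. -/
def S : Set ℕ := {n | (n + 1) % 5 ≠ 0 ∧ (n + 1) % 5 ≠ 2 ∧ (n + 1) % 5 ≠ 3}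

lemma prod_side (q : ℂ) (hq : ‖q‖ < 1) (n : ℕ) :
    (∏ i ∈ Finset.range (5 * n), S.mulIndicator (fun n : ℕ => (1 - q ^ (n + 1))⁻¹) i)
      * u (q ^ 5) n = u q ((5 * n : ℕ) : ℤ) * qPoch (q ^ 2) (q ^ 5) n * qPoch (q ^ 3) (q ^ 5) n := by
  rw [u_nat, u_nat]
  induction n with
  | zero => simp [qPoch]
  | succ n ih =>
    have m0 : (5 * n) ∈ S := by simp only [S, Set.mem_ofPred_eq]; omega
    have m1 : (5 * n + 1) ∉ S := by simp only [S, Set.mem_ofPred_eq]; omega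
    have m2 : (5 * n + 2) ∉ S := by simp only [S, Set.mem_ofPred_eq]; omega
    have m3 : (5 * n + 3) ∈ S := by simp only [S, Set.mem_ofPred_eq]; omega
    have m4 : (5 * n + 4) ∉ S := by simp only [S, Set.mem_ofPred_eq]; omega
    have q1 : ∀ (a p : ℂ) (k : ℕ), qPoch a p (k + 1) = qPoch a p k * (1 - a * p ^ k) := by
      intro a p k; simp only [qPoch, Finset.prod_range_succ]
    rw [show 5 * (n + 1) = 5 * n + 4 + 1 by ring]
    rw [Finset.prod_range_succ, Finset.prod_range_succ, Finset.prod_range_succ,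
      Finset.prod_range_succ, Finset.prod_range_succ, Set.mulIndicator_of_mem m0,
      Set.mulIndicator_of_notMem m1, Set.mulIndicator_of_notMem m2,
      Set.mulIndicator_of_mem m3, Set.mulIndicator_of_notMem m4]
    have d0 := one_sub_pow_ne q hq (5 * n)
    have d1 := one_sub_pow_ne q hq (5 * n + 1)
    have d2 := one_sub_pow_ne q hq (5 * n + 2)
    have d3 := one_sub_pow_ne q hq (5 * n + 3)
    have d4 := one_sub_pow_ne q hq (5 * n + 4)
    rw [q1 q q (5 * n + 4), q1 q q (5 * n + 3), q1 q q (5 * n + 2), q1 q q (5 * n + 1),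
      q1 q q (5 * n), q1, q1, q1]
    have p1 : ∀ k, q * q ^ k = q ^ (k + 1) := fun k => (pow_succ' q k).symm
    rw [p1, p1, p1, p1, p1]
    have p5 : q ^ 5 * (q ^ 5) ^ n = q ^ (5 * n + 4 + 1) := by rw [← pow_mul, ← pow_add]; congr 1; ring
    have p2 : q ^ 2 * (q ^ 5) ^ n = q ^ (5 * n + 1 + 1) := by rw [← pow_mul, ← pow_add]; congr 1; ring
    have p3 : q ^ 3 * (q ^ 5) ^ n = q ^ (5 * n + 2 + 1) := by rw [← pow_mul, ← pow_add]; congr 1; ring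
    rw [p5, p2, p3]
    generalize 1 - q ^ (5 * n + 1) = D0 at *
    generalize 1 - q ^ (5 * n + 1 + 1) = D1 at *
    generalize 1 - q ^ (5 * n + 2 + 1) = D2 at *
    generalize 1 - q ^ (5 * n + 3 + 1) = D3 at *
    generalize 1 - q ^ (5 * n + 4 + 1) = D4 at *
    simp only [mul_inv, mul_one]
    have c1 := inv_mul_cancel₀ d1
    have c2 := inv_mul_cancel₀ d2
    linear_combination (D0⁻¹ * D3⁻¹ * D4⁻¹) * ih -
      ((qPoch q q (5 * n))⁻¹ * D0⁻¹ * D3⁻¹ * D4⁻¹ * qPoch (q ^ 2) (q ^ 5) n *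
        qPoch (q ^ 3) (q ^ 5) n) * (c1 * D2⁻¹ * D2 + c2)

/-- Reindexing of the product. -/
def idx : S ≃ {j : ℕ // 0 < j ∧ j % 5 ≠ 0 ∧ j % 5 ≠ 2 ∧ j % 5 ≠ 3} where
  toFun n := ⟨n.1 + 1, Nat.succ_pos _, n.2⟩
  invFun j := ⟨j.1 - 1, by
    have h := j.2
    show (j.1 - 1 + 1) % 5 ≠ 0 ∧ (j.1 - 1 + 1) % 5 ≠ 2 ∧ (j.1 - 1 + 1) % 5 ≠ 3
    rw [Nat.sub_add_cancel h.1]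
    exact h.2⟩
  left_inv n := by simp
  right_inv j := by
    apply Subtype.ext
    exact Nat.sub_add_cancel j.2.1

lemma main (q : ℂ) (hq : ‖q‖ < 1) (h0 : q ≠ 0) :
    ∑' j : ℕ, q ^ (j ^ 2) / qPoch q q j =
      ∏' j : {j : ℕ // 0 < j ∧ j % 5 ≠ 0 ∧ j % 5 ≠ 2 ∧ j % 5 ≠ 3},
        (1 - q ^ (j : ℕ))⁻¹ := by
  have hq5 : ‖q ^ 5‖ < 1 := by
    rw [norm_pow]; exact pow_lt_one₀ (norm_nonneg q) hq (by norm_num)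
  have h05 : q ^ 5 ≠ 0 := pow_ne_zero _ h0
  obtain ⟨P, hP0, hP⟩ := tendsto_u q hq
  obtain ⟨R, hR0, hR⟩ := tendsto_u (q ^ 5) hq5
  obtain ⟨Z2, hZ2⟩ := tendsto_qPoch (q ^ 2) (q ^ 5) hq5
  obtain ⟨Z3, hZ3⟩ := tendsto_qPoch (q ^ 3) (q ^ 5) hq5
  -- the sum side
  have hsum : ∑' j : ℤ, q ^ (j ^ 2) * u q j = ∑' j : ℕ, q ^ (j ^ 2) / qPoch q q j := by
    rw [← (Nat.cast_injective (R := ℤ)).tsum_eq]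
    · refine tsum_congr fun j => ?_
      rw [u_nat, div_eq_mul_inv]
      have := zpow_natCast q (j ^ 2)
      push_cast at this
      rw [this]
    · intro j hj
      by_contra hn
      apply hj
      have : j < 0 := by
        by_contra hh
        exact hn ⟨j.toNat, by simp; omega⟩
      simp [u_neg q this]
  set A := ∑' j : ℕ, q ^ (j ^ 2) / qPoch q q j with hA
  set Θ := ∑' r : ℤ, (-1) ^ r * q ^ (2 * r + 5 * t r) with hΘ
  have hsΘ : Summable fun r : ℤ => ‖(-1 : ℂ) ^ r * q ^ (2 * r + 5 * t r)‖ := by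
    simpa using summable_zpow q hq h0 _ expo_bound
  have l1 := limit_one q hq hP (fun j => q ^ (j ^ 2)) (summable_zpow q hq h0 _ sq_bound)
  have l2 := limit_two q hq hP _ hsΘ
  simp_rw [finite_rr q hq h0] at l1
  have e1 := tendsto_nhds_unique l1 l2
  have e1' : A * P = Θ * P * P := by
    rw [← hsum, hΘ, ← tsum_mul_right, ← tsum_mul_right, ← tsum_mul_right, ← e1]
    refine tsum_congr fun r => by ring
  have e2 : A = Θ * P := mul_right_cancel₀ hP0 e1'
  -- Jacobi triple product
  have l3 := limit_two (q ^ 5) hq5 hR _ hsΘ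
  have l4 : Tendsto (fun n : ℕ => qPoch (q ^ 2) (q ^ 5) n * qPoch (q ^ 3) (q ^ 5) n *
      u (q ^ 5) ((n + n : ℕ) : ℤ)) atTop (𝓝 (Z2 * Z3 * R)) :=
    (hZ2.mul hZ3).mul (hR.comp (tendsto_atTop_mono (fun n => Nat.le_add_left n n) tendsto_id))
  have e3 : Θ * R * R = Z2 * Z3 * R := by
    rw [hΘ, ← tsum_mul_right, ← tsum_mul_right]
    refine tendsto_nhds_unique l3 (l4.congr fun n => ?_)
    have hj := (jtp (q ^ 5) (q ^ 2) hq5 h05 (pow_ne_zero _ h0) n n).tsum_eq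
    have : q ^ 5 / q ^ 2 = q ^ 3 := by field_simp
    rw [this] at hj
    push_cast
    rw [← hj]
    refine tsum_congr fun r => ?_
    unfold T
    have : q ^ (2 * r + 5 * t r) = (q ^ 2) ^ r * (q ^ 5) ^ t r := by
      rw [zpow_add₀ h0, zpow_mul, zpow_mul]
      norm_cast
    rw [this]
    ring
  have e4 : Θ * R = Z2 * Z3 := mul_right_cancel₀ hR0 e3
  -- product side
  have hprod : ∏' j : {j : ℕ // 0 < j ∧ j % 5 ≠ 0 ∧ j % 5 ≠ 2 ∧ j % 5 ≠ 3}, (1 - q ^ (j : ℕ))⁻¹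
      = ∏' n, S.mulIndicator (fun n : ℕ => (1 - q ^ (n + 1))⁻¹) n := by
    rw [← tprod_subtype, ← idx.tprod_eq]
    rfl
  rw [hprod]
  have l5 := (multipliable_ind q hq S).hasProd.tendsto_prod_nat
  have h5 : Tendsto (fun n : ℕ => 5 * n) atTop atTop :=
    tendsto_atTop_mono (fun n => by simp only [id]; omega) tendsto_id
  have l6 := (l5.comp h5).mul hR
  have l7 := ((hP.comp h5).mul hZ2).mul hZ3
  have e5 := tendsto_nhds_unique l6 (l7.congr fun n => (prod_side q hq n).symm)
  apply mul_right_cancel₀ hR0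
  rw [e5, e2]
  linear_combination P * e4

end RR

/-- The second Rogers–Ramanujan identity. -/
theorem rogers_ramanujan_second (q : ℂ) (hq : ‖q‖ < 1) :
    ∑' j : ℕ, q ^ (j ^ 2) / qPoch q q j =
      ∏' j : {j : ℕ // 0 < j ∧ j % 5 ≠ 0 ∧ j % 5 ≠ 2 ∧ j % 5 ≠ 3},
        (1 - q ^ (j : ℕ))⁻¹ := by
  by_cases h0 : q = 0
  · subst h0
    rw [tsum_eq_single 0 (by intro j hj; simp [hj])]
    have : ∀ j : {j : ℕ // 0 < j ∧ j % 5 ≠ 0 ∧ j % 5 ≠ 2 ∧ j % 5 ≠ 3},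
        (1 - (0 : ℂ) ^ (j : ℕ))⁻¹ = 1 := by
      intro j
      simp [j.2.1.ne']
    simp_rw [this]
    simp [qPoch]
  · exact RR.main q hq h0
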